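/- Let 𝒩 be a network architecture whose buffer structure satisfies the buffer axioms B1–B8 (history insensitivity, channel compliance fact CC6). Let w be an 𝒩-channel-compliant finite word, let α, β be synchronous words, let p ≠ q be participants and v a value, such that: (i) for every participant r, w↾r is a prefix of split(α·β)↾r; (ii) w↾q = split(α)↾q; and (iii) w·(p▷q?v) is 𝒩-channel-compliant. Then there exists a finite word w' such that: for every participant r, w'↾r is a prefix of split(β)↾r; w'↾q is the empty word; and w'·(p▷q?v) is 𝒩-channel-compliant. -/

import Mathlib

/-!
The witness `w'` is `w` with the events of `α` forgotten, one message of `α` at a time: to forget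
the first message `m` of `α`, delete from `w` the first send of `m` and the first receive of `m`
(when they occur). Local projections behave well because the first event of the sender (resp.
receiver) of `m` in `split (α ++ β)` is exactly that send (resp. receive).

Channel compliance splits into definedness of the induced operation sequence on each buffer
(`runFrom_isSome_iff`), so it remains to delete operations from a sequence defined on the empty
buffer. If `m` is received in `w`, then, as a message that was never inserted cannot be removed
(`not_rem_of_not_ins`), its first send precedes its first receive, and B8 deletes the pair
(`cancel_pair`). If `m` is not received in `w`, then B5 deletes its send (`cancel_ins`); here the
final event `p▷q?v` is not a receive of `m`, since `q` has executed all its events of `α`.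
-/

/-- Operations on a buffer: insert or remove a message. -/
inductive BOp (M : Type) where
  | ins (m : M)
  | rem (m : M)

/-- Apply a single buffer operation. -/
def applyOp {M B : Type} (ins rem : M → B → Option B) : BOp M → B → Option B
  | .ins m, b => ins m b
  | .rem m, b => rem m b

/-- Apply a finite sequence of buffer operations, left to right. -/
def applySeq {M B : Type} (ins rem : M → B → Option B) : List (BOp M) → B → Option B
  | [], b => some b
  | op :: σ, b => (applyOp ins rem op b).bind (applySeq ins rem σ)

/-- The eight buffer axioms B1–B8 for a buffer structure with contents `B`,
partial operations `ins`, `rem` and empty buffer `b0`. -/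
structure BufferAxioms (M B : Type) (ins rem : M → B → Option B) (b0 : B) : Prop where
  b1 : ∀ (m : M) (b : B), (ins m b).isSome
  b2 : ∀ m : M, ((ins m b0).bind (rem m)).isSome
  b3 : ∀ m : M, rem m b0 = none
  b4 : ∀ (m m' : M) (b : B), (rem m b).isSome → ((ins m' b).bind (rem m)).isSome
  b5 : ∀ (m : M) (b : B) (σ : List (BOp M)), BOp.rem m ∉ σ →
        ((ins m b).bind (applySeq ins rem σ)).isSome → (applySeq ins rem σ b).isSome
  b6 : ∀ (m : M) (b : B), (rem m b).isSome →
        (ins m b).bind (rem m) = (rem m b).bind (ins m)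
  b7 : ∀ (m m' : M) (b : B), m ≠ m' →
        (ins m b).bind (rem m') = (rem m' b).bind (ins m)
  b8 : ∀ (m : M) (b : B) (σ : List (BOp M)), rem m b = none → BOp.rem m ∉ σ →
        (((ins m b).bind (applySeq ins rem σ)).bind (rem m)).isSome →
        ((ins m b).bind (applySeq ins rem σ)).bind (rem m) = applySeq ins rem σ b

/-- Asynchronous events: send events `p▷q!v` and receive events `p▷q?v`. -/
inductive Event (P V : Type) where
  | send (p q : P) (v : V)
  | recv (p q : P) (v : V)
deriving DecidableEq

/-- The active participant of an event: the sender of a send, the receiver of a receive. -/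
def Event.active {P V : Type} : Event P V → P
  | .send p _ _ => p
  | .recv _ q _ => q

/-- A network architecture: channels `C`, buffer contents `B`, a channel map,
partial insert/remove operations, and an empty buffer. -/
structure NetArch (P V C B : Type) where
  chan : P → P → C
  insert : P × P × V → B → Option B
  remove : P × P × V → B → Option B
  b0 : B

variable {P V C B : Type}

/-- Executing a single event on a channel state. -/
def NetArch.step [DecidableEq C] (N : NetArch P V C B) :
    Event P V → (C → B) → Option (C → B)
  | .send p q v, ξ => (N.insert (p, q, v) (ξ (N.chan p q))).map (Function.update ξ (N.chan p q))
  | .recv p q v, ξ => (N.remove (p, q, v) (ξ (N.chan p q))).map (Function.update ξ (N.chan p q))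

/-- Executing a finite word of events from a channel state. -/
def NetArch.runFrom [DecidableEq C] (N : NetArch P V C B) :
    List (Event P V) → (C → B) → Option (C → B)
  | [], ξ => some ξ
  | e :: w, ξ => (N.step e ξ).bind (N.runFrom w)

/-- The initial channel state: every channel holds the empty buffer. -/
def NetArch.init (N : NetArch P V C B) : C → B := fun _ => N.b0

/-- A finite word is channel-compliant if executing it from the initial channel
state is defined at every step. -/
def NetArch.compliant [DecidableEq C] (N : NetArch P V C B) (w : List (Event P V)) : Prop :=
  (N.runFrom w N.init).isSome

/-- A finite word is channel-matched if it is channel-compliant and reaches the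
initial (all-empty) channel state. -/
def NetArch.matched [DecidableEq C] (N : NetArch P V C B) (w : List (Event P V)) : Prop :=
  N.runFrom w N.init = some N.init

/-- Projection of a word onto the events in which participant `r` is active. -/
def proj [DecidableEq P] (r : P) (w : List (Event P V)) : List (Event P V) :=
  w.filter (fun e => decide (e.active = r))

/-- Equality under local projection. -/
def equivP [DecidableEq P] (w₁ w₂ : List (Event P V)) : Prop :=
  ∀ r : P, proj r w₁ = proj r w₂

/-- `split` replaces every synchronous message exchange `(p,q,v)` by the two
consecutive asynchronous events `p▷q!v · p▷q?v`. -/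
def split : List (P × P × V) → List (Event P V)
  | [] => []
  | m :: ρ => Event.send m.1 m.2.1 m.2.2 :: Event.recv m.1 m.2.1 m.2.2 :: split ρ

/-! ### Buffers -/

theorem applySeq_append {M B : Type} (ins rem : M → B → Option B) (σ τ : List (BOp M)) (b : B) :
    applySeq ins rem (σ ++ τ) b = (applySeq ins rem σ b).bind (applySeq ins rem τ) := by
  induction σ generalizing b with
  | nil => rfl
  | cons o σ ih =>
    simp only [List.cons_append, applySeq, Option.bind_assoc]
    congr 1
    funext b'
    exact ih b'

/-- A message that has never been inserted cannot be removed. The first operation on the empty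
buffer is, by B3, an insertion of some other message; it can be deleted, alone by B5 or together
with its first removal by B8, whence the claim by induction on the length. -/
theorem not_rem_of_not_ins {M B : Type} {ins rem : M → B → Option B} {b0 : B}
    (h : BufferAxioms M B ins rem b0) (m : M) (n : ℕ) :
    ∀ σ : List (BOp M), σ.length ≤ n → BOp.ins m ∉ σ →
      applySeq ins rem (σ ++ [BOp.rem m]) b0 = none := by
  induction n with
  | zero =>
    intro σ hl _
    obtain rfl : σ = [] := List.length_eq_zero_iff.mp (by omega)
    simp [applySeq, applyOp, h.b3]
  | succ n ih =>
    intro σ hl hm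
    by_contra hne
    have hsome : (applySeq ins rem (σ ++ [BOp.rem m]) b0).isSome :=
      Option.isSome_iff_ne_none.mpr hne
    cases σ with
    | nil => simp [applySeq, applyOp, h.b3] at hsome
    | cons o σ =>
      cases o with
      | rem m' => simp [applySeq, applyOp, h.b3] at hsome
      | ins m' =>
        have hmm : m ≠ m' := fun e => hm (by simp [e])
        have hmσ : BOp.ins m ∉ σ := fun e => hm (by simp [e])
        simp only [List.length_cons] at hl
        by_cases hr : BOp.rem m' ∈ σ
        · obtain ⟨σ₁, σ₂, rfl, hr₁⟩ := List.eq_append_cons_of_mem hr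
          have hkey : applySeq ins rem (BOp.ins m' :: (σ₁ ++ BOp.rem m' :: σ₂) ++ [BOp.rem m]) b0
              = (((ins m' b0).bind (applySeq ins rem σ₁)).bind (rem m')).bind
                  (applySeq ins rem (σ₂ ++ [BOp.rem m])) := by
            simp only [List.cons_append, List.append_assoc, applySeq, applyOp, Option.bind_assoc]
            congr 1
            funext b'
            rw [applySeq_append]
            rfl
          rw [hkey] at hsome
          rw [h.b8 m' b0 σ₁ (h.b3 m') hr₁ (Option.isSome_of_isSome_bind hsome),
            ← applySeq_append, ← List.append_assoc,
            ih (σ₁ ++ σ₂) (by simp at hl ⊢; omega) (by simp at hmσ ⊢; tauto)] at hsome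
          simp at hsome
        · have := h.b5 m' b0 (σ ++ [BOp.rem m]) (by simp [hr, hmm.symm]) hsome
          rw [ih σ (by omega) hmσ] at this
          simp at this

/-- Deletion of an insertion whose message is not removed afterwards. -/
theorem cancel_ins {M B : Type} {ins rem : M → B → Option B} {b0 : B}
    (h : BufferAxioms M B ins rem b0) (m : M) (σ τ : List (BOp M)) (hτ : BOp.rem m ∉ τ)
    (hs : (applySeq ins rem (σ ++ BOp.ins m :: τ) b0).isSome) :
    (applySeq ins rem (σ ++ τ) b0).isSome := by
  rw [applySeq_append] at hs ⊢
  cases hb : applySeq ins rem σ b0 with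
  | none => simp [hb] at hs
  | some b =>
    rw [hb] at hs
    exact h.b5 m b τ hτ hs

/-- Deletion of the first insertion of a message together with its first removal. -/
theorem cancel_pair {M B : Type} {ins rem : M → B → Option B} {b0 : B}
    (h : BufferAxioms M B ins rem b0) (m : M) (σ τ υ : List (BOp M))
    (hσ : BOp.ins m ∉ σ) (hτ : BOp.rem m ∉ τ)
    (hs : (applySeq ins rem (σ ++ BOp.ins m :: (τ ++ BOp.rem m :: υ)) b0).isSome) :
    (applySeq ins rem (σ ++ (τ ++ υ)) b0).isSome := by
  have hnone := not_rem_of_not_ins h m σ.length σ le_rfl hσ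
  rw [applySeq_append] at hs hnone ⊢
  cases hb : applySeq ins rem σ b0 with
  | none => simp [hb] at hs
  | some b =>
    rw [hb] at hs hnone
    have hrem : rem m b = none := by
      simpa [applySeq, applyOp] using hnone
    have hkey : applySeq ins rem (BOp.ins m :: (τ ++ BOp.rem m :: υ)) b
        = (((ins m b).bind (applySeq ins rem τ)).bind (rem m)).bind (applySeq ins rem υ) := by
      simp only [applySeq, applyOp, Option.bind_assoc]
      congr 1
      funext b'
      rw [applySeq_append]
      rfl
    change (applySeq ins rem (BOp.ins m :: (τ ++ BOp.rem m :: υ)) b).isSome at hs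
    change (applySeq ins rem (τ ++ υ) b).isSome
    rw [hkey] at hs
    rwa [h.b8 m b τ hrem hτ (Option.isSome_of_isSome_bind hs), ← applySeq_append] at hs

/-! ### Channels -/

/-- The operation an event performs on channel `c`, if it acts on `c` at all. -/
def NetArch.opOn [DecidableEq C] (N : NetArch P V C B) (c : C) :
    Event P V → Option (BOp (P × P × V))
  | .send p q v => if N.chan p q = c then some (.ins (p, q, v)) else none
  | .recv p q v => if N.chan p q = c then some (.rem (p, q, v)) else none

/-- The sequence of operations a word performs on channel `c`. -/
def NetArch.ops [DecidableEq C] (N : NetArch P V C B) (c : C) (w : List (Event P V)) :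
    List (BOp (P × P × V)) :=
  w.filterMap (N.opOn c)

theorem NetArch.mem_ops_ins [DecidableEq C] (N : NetArch P V C B) (c : C)
    (w : List (Event P V)) (p q : P) (v : V) (h : BOp.ins (p, q, v) ∈ N.ops c w) :
    Event.send p q v ∈ w := by
  obtain ⟨e, he, hc⟩ := List.mem_filterMap.mp h
  cases e <;> simp only [NetArch.opOn] at hc <;> split_ifs at hc <;> simp at hc
  obtain ⟨rfl, rfl, rfl⟩ := hc
  exact he

theorem NetArch.mem_ops_rem [DecidableEq C] (N : NetArch P V C B) (c : C)
    (w : List (Event P V)) (p q : P) (v : V) (h : BOp.rem (p, q, v) ∈ N.ops c w) :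
    Event.recv p q v ∈ w := by
  obtain ⟨e, he, hc⟩ := List.mem_filterMap.mp h
  cases e <;> simp only [NetArch.opOn] at hc <;> split_ifs at hc <;> simp at hc
  obtain ⟨rfl, rfl, rfl⟩ := hc
  exact he

/-- Common part of the two cases of `NetArch.runFrom_isSome_iff`: an operation `o` on channel `d`,
followed by a word, is defined iff the operation sequences are defined on each channel. -/
theorem NetArch.isSome_bind_update_iff [DecidableEq C] (N : NetArch P V C B)
    (w : List (Event P V)) (d : C) (o : BOp (P × P × V)) (ξ : C → B)
    (ih : ∀ ξ : C → B, (N.runFrom w ξ).isSome ↔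
      ∀ c, (applySeq N.insert N.remove (N.ops c w) (ξ c)).isSome) :
    (((applyOp N.insert N.remove o (ξ d)).map (Function.update ξ d)).bind (N.runFrom w)).isSome ↔
      ∀ c, (applySeq N.insert N.remove
        ((if d = c then some o else none).toList ++ N.ops c w) (ξ c)).isSome := by
  cases hb : applyOp N.insert N.remove o (ξ d) with
  | none =>
    simp only [Option.map_none, Option.bind_none, Option.isSome_none, Bool.false_eq_true,
      false_iff, not_forall]
    exact ⟨d, by simp [applySeq, hb]⟩
  | some b =>
    simp only [Option.map_some, Option.bind_some]
    rw [ih]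
    refine forall_congr' fun c => ?_
    by_cases hc : d = c
    · subst hc
      simp [applySeq, hb]
    · simp [hc, Function.update_of_ne (Ne.symm hc)]

/-- A word can be executed iff the induced operation sequences are defined on every channel. -/
theorem NetArch.runFrom_isSome_iff [DecidableEq C] (N : NetArch P V C B)
    (w : List (Event P V)) (ξ : C → B) :
    (N.runFrom w ξ).isSome ↔
      ∀ c, (applySeq N.insert N.remove (N.ops c w) (ξ c)).isSome := by
  induction w generalizing ξ with
  | nil => simp [NetArch.runFrom, NetArch.ops, applySeq]
  | cons e w ih =>
    have hops : ∀ c, N.ops c (e :: w) = (N.opOn c e).toList ++ N.ops c w := by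
      intro c
      simp only [NetArch.ops, List.filterMap_cons]
      cases N.opOn c e <;> rfl
    simp only [hops]
    cases e with
    | send p q v => exact N.isSome_bind_update_iff w (N.chan p q) (.ins (p, q, v)) ξ ih
    | recv p q v => exact N.isSome_bind_update_iff w (N.chan p q) (.rem (p, q, v)) ξ ih

theorem NetArch.compliant_iff [DecidableEq C] (N : NetArch P V C B) (w : List (Event P V)) :
    N.compliant w ↔ ∀ c, (applySeq N.insert N.remove (N.ops c w) N.b0).isSome :=
  N.runFrom_isSome_iff w N.init

/-- In a compliant word, a receive is preceded by a send of the same message. -/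
theorem NetArch.send_mem [DecidableEq C] (N : NetArch P V C B)
    (hN : BufferAxioms (P × P × V) B N.insert N.remove N.b0)
    (w u : List (Event P V)) (p q : P) (v : V)
    (h : N.compliant (w ++ Event.recv p q v :: u)) : Event.send p q v ∈ w := by
  by_contra hn
  have hc := (N.compliant_iff _).mp h (N.chan p q)
  have hops : N.ops (N.chan p q) (w ++ Event.recv p q v :: u)
      = (N.ops (N.chan p q) w ++ [BOp.rem (p, q, v)]) ++ N.ops (N.chan p q) u := by
    simp [NetArch.ops, NetArch.opOn]
  rw [hops, applySeq_append,
    not_rem_of_not_ins hN (p, q, v) _ _ le_rfl (fun e => hn (N.mem_ops_ins _ _ _ _ _ e))] at hc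
  simp at hc

theorem NetArch.compliant_cancel_send [DecidableEq C] (N : NetArch P V C B)
    (hN : BufferAxioms (P × P × V) B N.insert N.remove N.b0)
    (u₁ u₂ : List (Event P V)) (p q : P) (v : V) (hu : Event.recv p q v ∉ u₂)
    (h : N.compliant (u₁ ++ Event.send p q v :: u₂)) : N.compliant (u₁ ++ u₂) := by
  rw [N.compliant_iff] at h ⊢
  intro c
  have hc := h c
  by_cases hd : N.chan p q = c
  · simp only [NetArch.ops, NetArch.opOn, List.filterMap_append, List.filterMap_cons, hd,
      if_true] at hc ⊢
    exact cancel_ins hN (p, q, v) _ _ (fun e => hu (N.mem_ops_rem _ _ _ _ _ e)) hc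
  · simpa [NetArch.ops, NetArch.opOn, hd] using hc

theorem NetArch.compliant_cancel_pair [DecidableEq C] (N : NetArch P V C B)
    (hN : BufferAxioms (P × P × V) B N.insert N.remove N.b0)
    (u₁ u₂ u₃ : List (Event P V)) (p q : P) (v : V)
    (hu₁ : Event.send p q v ∉ u₁) (hu₂ : Event.recv p q v ∉ u₂)
    (h : N.compliant (u₁ ++ Event.send p q v :: (u₂ ++ Event.recv p q v :: u₃))) :
    N.compliant (u₁ ++ (u₂ ++ u₃)) := by
  rw [N.compliant_iff] at h ⊢
  intro c
  have hc := h c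
  by_cases hd : N.chan p q = c
  · simp only [NetArch.ops, NetArch.opOn, List.filterMap_append, List.filterMap_cons, hd,
      if_true] at hc ⊢
    exact cancel_pair hN (p, q, v) _ _ _ (fun e => hu₁ (N.mem_ops_ins _ _ _ _ _ e))
      (fun e => hu₂ (N.mem_ops_rem _ _ _ _ _ e)) hc
  · simpa [NetArch.ops, NetArch.opOn, hd] using hc

/-! ### Projections -/

theorem proj_append [DecidableEq P] (r : P) (u w : List (Event P V)) :
    proj r (u ++ w) = proj r u ++ proj r w :=
  List.filter_append u w

theorem proj_cons [DecidableEq P] (r : P) (e : Event P V) (w : List (Event P V)) :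
    proj r (e :: w) = if e.active = r then e :: proj r w else proj r w := by
  simp [proj, List.filter_cons]

theorem mem_of_mem_proj [DecidableEq P] {r : P} {e : Event P V} {w : List (Event P V)}
    (h : e ∈ proj r w) : e ∈ w :=
  (List.mem_filter.mp h).1

theorem initial_cancel {A : Type} {a : A} {l₁ l₂ X : List A} (ha : a ∉ l₁)
    (h : l₁ ++ a :: l₂ <+: a :: X) : l₁ ++ l₂ <+: X := by
  cases l₁ with
  | nil => simpa using h
  | cons b l₁ => simp_all

theorem initial_of_not_mem {A : Type} {a : A} {l X Y : List A} (ha : a ∉ l)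
    (h : l <+: a :: X) : l <+: Y := by
  cases l with
  | nil => simp
  | cons b l => simp_all

theorem eq_cancel {A : Type} {a : A} {l₁ l₂ X : List A} (ha : a ∉ l₁)
    (h : l₁ ++ a :: l₂ = a :: X) : l₁ ++ l₂ = X := by
  cases l₁ with
  | nil => simpa using h
  | cons b l₁ => simp_all

/-- Forgetting the first message `(s, t, x)` of the synchronous word: the word `w` is replaced by
a word whose projections lose their event of this message, if they have one. -/
theorem forget_message [DecidableEq P] [DecidableEq C] (N : NetArch P V C B)
    (hN : BufferAxioms (P × P × V) B N.insert N.remove N.b0)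
    (w : List (Event P V)) (s t : P) (x : V) (hst : s ≠ t) (α β : List (P × P × V))
    (p q : P) (v : V)
    (h1 : ∀ r : P, proj r w <+: proj r (split ((s, t, x) :: (α ++ β))))
    (h2 : proj q w = proj q (split ((s, t, x) :: α)))
    (h3 : N.compliant (w ++ [Event.recv p q v])) :
    ∃ w' : List (Event P V),
      (∀ r : P, proj r w' <+: proj r (split (α ++ β))) ∧
      proj q w' = proj q (split α) ∧
      N.compliant (w' ++ [Event.recv p q v]) := by
  simp only [split, proj_cons, Event.active] at h1 h2
  by_cases hr : Event.recv s t x ∈ w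
  · obtain ⟨u, u₃, rfl, hu⟩ := List.eq_append_cons_of_mem hr
    have hs : Event.send s t x ∈ u :=
      N.send_mem hN u (u₃ ++ [Event.recv p q v]) s t x (by simpa using h3)
    obtain ⟨u₁, u₂, rfl, hu₁⟩ := List.eq_append_cons_of_mem hs
    have hr₁ : Event.recv s t x ∉ u₁ := fun e => hu (by simp [e])
    have hr₂ : Event.recv s t x ∉ u₂ := fun e => hu (by simp [e])
    have hrp : ∀ r, Event.recv s t x ∉ proj r u₁ ++ proj r u₂ := fun r e =>
      (List.mem_append.mp e).elim (fun e => hr₁ (mem_of_mem_proj e))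
        (fun e => hr₂ (mem_of_mem_proj e))
    have hsp : ∀ r, Event.send s t x ∉ proj r u₁ := fun r e => hu₁ (mem_of_mem_proj e)
    simp only [proj_append, proj_cons, Event.active] at h1 h2
    refine ⟨u₁ ++ (u₂ ++ u₃), fun r => ?_, ?_, ?_⟩
    · have h := h1 r
      simp only [proj_append]
      by_cases h_s : s = r
      · have h_t : t ≠ r := fun e => hst (h_s.trans e.symm)
        simp only [h_s, h_t, if_true, if_false, List.append_assoc, List.cons_append] at h
        exact initial_cancel (h_s ▸ hsp r) h
      · by_cases h_t : t = r
        · simp only [h_s, h_t, if_true, if_false] at h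
          rw [← List.append_assoc]
          exact initial_cancel (h_t ▸ hrp r) h
        · simpa [h_s, h_t] using h
    · simp only [proj_append]
      by_cases h_s : s = q
      · have h_t : t ≠ q := fun e => hst (h_s.trans e.symm)
        simp only [h_s, h_t, if_true, if_false, List.append_assoc, List.cons_append] at h2
        exact eq_cancel (h_s ▸ hsp q) h2
      · by_cases h_t : t = q
        · simp only [h_s, h_t, if_true, if_false] at h2
          rw [← List.append_assoc]
          exact eq_cancel (h_t ▸ hrp q) h2
        · simpa [h_s, h_t] using h2
    · have := N.compliant_cancel_pair hN u₁ u₂ (u₃ ++ [Event.recv p q v]) s t x hu₁ hr₂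
        (by simpa using h3)
      simpa using this
  · -- `q` has executed its events of `α`, so it is not the receiver of the unreceived message.
    have htq : t ≠ q := by
      rintro rfl
      simp only [hst, if_true, if_false] at h2
      exact hr (mem_of_mem_proj (r := t) (by simp [h2]))
    by_cases hs : Event.send s t x ∈ w
    · obtain ⟨u₁, u₂, rfl, hu₁⟩ := List.eq_append_cons_of_mem hs
      have hr₁ : Event.recv s t x ∉ u₁ := fun e => hr (by simp [e])
      have hr₂ : Event.recv s t x ∉ u₂ := fun e => hr (by simp [e])
      have hrp : ∀ r, Event.recv s t x ∉ proj r u₁ ++ proj r u₂ := fun r e =>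
        (List.mem_append.mp e).elim (fun e => hr₁ (mem_of_mem_proj e))
          (fun e => hr₂ (mem_of_mem_proj e))
      have hsp : ∀ r, Event.send s t x ∉ proj r u₁ := fun r e => hu₁ (mem_of_mem_proj e)
      simp only [proj_append, proj_cons, Event.active] at h1 h2
      refine ⟨u₁ ++ u₂, fun r => ?_, ?_, ?_⟩
      · have h := h1 r
        rw [proj_append]
        by_cases h_s : s = r
        · have h_t : t ≠ r := fun e => hst (h_s.trans e.symm)
          simp only [h_s, h_t, if_true, if_false] at h
          exact initial_cancel (h_s ▸ hsp r) h
        · by_cases h_t : t = r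
          · simp only [h_s, h_t, if_true, if_false] at h
            exact initial_of_not_mem (h_t ▸ hrp r) h
          · simpa [h_s, h_t] using h
      · rw [proj_append]
        by_cases h_s : s = q
        · simp only [h_s, htq, if_true, if_false] at h2
          exact eq_cancel (h_s ▸ hsp q) h2
        · simpa [h_s, htq] using h2
      · have := N.compliant_cancel_send hN u₁ (u₂ ++ [Event.recv p q v]) s t x
          (by simp [hr₂, htq]) (by simpa using h3)
        simpa using this
    · refine ⟨w, fun r => ?_, ?_, h3⟩
      · have h := h1 r
        by_cases h_s : s = r
        · rw [if_pos h_s] at h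
          exact initial_of_not_mem (fun e => hs (mem_of_mem_proj e)) h
        · by_cases h_t : t = r
          · subst h_t
            simp only [h_s, if_true, if_false] at h
            exact initial_of_not_mem (fun e => hr (mem_of_mem_proj e)) h
          · simpa [h_s, h_t] using h
      · by_cases h_s : s = q
        · rw [if_pos h_s] at h2
          exact absurd (mem_of_mem_proj (r := q) (by rw [h2]; simp)) hs
        · simpa [h_s, htq] using h2

/-- CC6 (history insensitivity): for a network architecture satisfying the
buffer axioms B1–B8, an asynchronous trace compliant with a synchronous trace
`α·β` in which `q` has completed exactly its events of `α` can selectively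
forget the events of `α`, preserving receivability of a message for `q`. -/
theorem cc6_history_insensitive {P V C B : Type}
    [DecidableEq P] [DecidableEq C] (N : NetArch P V C B)
    (hN : BufferAxioms (P × P × V) B N.insert N.remove N.b0)
    (w : List (Event P V)) (hw : N.compliant w)
    (α β : List (P × P × V))
    (hα : ∀ m ∈ α, m.1 ≠ m.2.1) (hβ : ∀ m ∈ β, m.1 ≠ m.2.1)
    (p q : P) (hpq : p ≠ q) (v : V)
    (h1 : ∀ r : P, proj r w <+: proj r (split (α ++ β)))
    (h2 : proj q w = proj q (split α))
    (h3 : N.compliant (w ++ [Event.recv p q v])) :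
    ∃ w' : List (Event P V),
      (∀ r : P, proj r w' <+: proj r (split β)) ∧
      proj q w' = [] ∧
      N.compliant (w' ++ [Event.recv p q v]) := by
  clear hw
  induction α generalizing w with
  | nil => exact ⟨w, h1, h2, h3⟩
  | cons m α ih =>
    obtain ⟨s, t, x⟩ := m
    obtain ⟨w', h1', h2', h3'⟩ := forget_message N hN w s t x (hα (s, t, x) (by simp)) α β p q v
      h1 h2 h3
    exact ih w' (fun m hm => hα m (by simp [hm])) h1' h2' h3'
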